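/- Let 0 < q < 1, let n ≥ 1, and let f be a polynomial in n variables with real coefficients. Then the iterated Jackson q-integral ∫_0^1 ∫_0^{x_n} ⋯ ∫_0^{x_2} f(x_1,…,x_n) d_q x_1 ⋯ d_q x_n equals (1−q)^n ∑_{μ ∈ Par_n} q^{|μ|} f(q^{μ_1},…,q^{μ_n}), where the absolutely convergent sum is over all partitions μ ∈ Par_n. -/

import Mathlib

/-- Jackson `q`-integral `∫_0^b g(x) d_q x = (1-q) ∑_{i≥0} g(b q^i) b q^i`. -/
noncomputable def jackson (q b : ℝ) (g : ℝ → ℝ) : ℝ :=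
  (1 - q) * ∑' i : ℕ, g (b * q ^ i) * (b * q ^ i)

/-- Iterated Jackson `q`-integral
`∫_0^b ∫_0^{x_n} ⋯ ∫_0^{x_2} f(x_1,…,x_n) d_q x_1 ⋯ d_q x_n`. -/
noncomputable def iterJ (q : ℝ) : (n : ℕ) → ℝ → ((Fin n → ℝ) → ℝ) → ℝ
  | 0, _, f => f (fun i => i.elim0)
  | n + 1, b, f => jackson q b (fun t => iterJ q n t (fun x => f (Fin.snoc x t)))

/-!
The outermost Jackson integral up to `b` fixes `x_n = b q^k`, and the remaining variables then run
over an iterated Jackson integral up to `b q^k`, whose lattice points are `b q^(k + ν_i)`. Since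
`(k, ν) ↦ (ν_1 + k, …, ν_{n-1} + k, k)` is a bijection from pairs of a natural number and a
partition with `n - 1` parts onto partitions with `n` parts, induction on `n`, for all `b` at once,
turns the iterated integral into a single sum over partitions. Absolute convergence justifies
merging the sums; for a polynomial it follows from boundedness of `f` on a cube and a product of
geometric series.
-/

/-- The contribution `(∏ᵢ b q^{μᵢ}) f(b q^{μ₁}, …, b q^{μₙ})` of the lattice point with exponents
`μ` to the iterated Jackson integral of `f` up to `b`, without the factor `(1 - q)^n`. -/
noncomputable def jacksonTerm (q b : ℝ) {n : ℕ} (f : (Fin n → ℝ) → ℝ) (μ : Fin n → ℕ) : ℝ :=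
  (∏ i, b * q ^ μ i) * f fun i => b * q ^ μ i

theorem jacksonTerm_fin_zero (q b : ℝ) (f : (Fin 0 → ℝ) → ℝ) (μ : Fin 0 → ℕ) :
    jacksonTerm q b f μ = iterJ q 0 b f := by
  simp only [jacksonTerm, Finset.univ_eq_empty, Finset.prod_empty, one_mul, iterJ]
  exact congrArg f (Subsingleton.elim _ _)

theorem jacksonTerm_snoc (q b : ℝ) {n : ℕ} (f : (Fin (n + 1) → ℝ) → ℝ) (ν : Fin n → ℕ) (k : ℕ) :
    jacksonTerm q b f (Fin.snoc (fun i => ν i + k) k : Fin (n + 1) → ℕ) =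
      jacksonTerm q (b * q ^ k) (fun x => f (Fin.snoc x (b * q ^ k))) ν * (b * q ^ k) := by
  have node_snoc : (fun i => b * q ^ (Fin.snoc (fun i => ν i + k) k : Fin (n + 1) → ℕ) i) =
      (Fin.snoc (fun i => b * q ^ k * q ^ ν i) (b * q ^ k) : Fin (n + 1) → ℝ) := by
    refine funext <| Fin.lastCases (by simp) fun i => ?_
    simp only [Fin.snoc_castSucc]
    ring
  simp only [jacksonTerm, node_snoc, Fin.prod_snoc]
  ring

theorem antitone_snoc_add {n : ℕ} {ν : Fin n → ℕ} (hν : Antitone ν) (k : ℕ) :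
    Antitone (Fin.snoc (fun i => ν i + k) k : Fin (n + 1) → ℕ) := by
  intro i j hij
  induction j using Fin.lastCases with
  | last => induction i using Fin.lastCases <;> simp
  | cast j =>
    obtain ⟨i, rfl⟩ := Fin.exists_castSucc_eq.mpr (hij.trans_lt (Fin.castSucc_lt_last j)).ne
    simpa using hν (Fin.castSucc_le_castSucc_iff.mp hij)

/-- A partition with `n + 1` parts, encoded as its last part `k` together with the partition
obtained by subtracting `k` from the other parts. -/
def antitoneSnocEquiv (n : ℕ) :
    ℕ × {ν : Fin n → ℕ // Antitone ν} ≃ {μ : Fin (n + 1) → ℕ // Antitone μ} where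
  toFun p := ⟨Fin.snoc (fun i => p.2.1 i + p.1) p.1, antitone_snoc_add p.2.2 p.1⟩
  invFun μ := (μ.1 (Fin.last n), ⟨fun i => μ.1 i.castSucc - μ.1 (Fin.last n), fun _ _ hij =>
    Nat.sub_le_sub_right (μ.2 (Fin.castSucc_le_castSucc_iff.mpr hij)) _⟩)
  left_inv p := by simp
  right_inv μ := by
    refine Subtype.ext <| funext <| Fin.lastCases (by simp) fun i => ?_
    simpa using Nat.sub_add_cancel (μ.2 (Fin.le_last i.castSucc))

theorem summable_norm_prod_apply {R κ : Type*} [NormedCommRing R] {n : ℕ} {g : Fin n → κ → R}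
    (hg : ∀ i, Summable fun k => ‖g i k‖) :
    Summable fun μ : Fin n → κ => ‖∏ i, g i (μ i)‖ := by
  induction n with
  | zero => exact (hasSum_fintype _).summable
  | succ n ih =>
    rw [← (Fin.consEquiv fun _ => κ).summable_iff]
    refine ((hg 0).mul_norm (ih fun i => hg i.succ)).congr fun p => ?_
    simp [Fin.consEquiv, Fin.prod_univ_succ]

theorem summable_jacksonTerm_of_continuousOn {q : ℝ} (hq : |q| < 1) {b : ℝ} {n : ℕ}
    {f : (Fin n → ℝ) → ℝ} (hf : ContinuousOn f (Metric.closedBall 0 |b|)) :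
    Summable (jacksonTerm q b f) := by
  obtain ⟨C, hC⟩ := (isCompact_closedBall 0 |b|).exists_bound_of_continuousOn hf
  have summable_weight : Summable fun μ : Fin n → ℕ => ‖∏ i, b * q ^ μ i‖ :=
    summable_norm_prod_apply (g := fun _ k => b * q ^ k) fun _ =>
      ((summable_geometric_of_abs_lt_one hq).mul_left b).norm
  have node_mem (μ : Fin n → ℕ) : (fun i => b * q ^ μ i) ∈ Metric.closedBall 0 |b| := by
    rw [mem_closedBall_zero_iff, pi_norm_le_iff_of_nonneg (abs_nonneg b)]
    intro i
    rw [norm_mul, norm_pow]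
    exact mul_le_of_le_one_right (abs_nonneg b) (pow_le_one₀ (abs_nonneg q) hq.le)
  refine (summable_weight.mul_right C).of_norm_bounded fun μ => ?_
  rw [jacksonTerm, norm_mul]
  exact mul_le_mul_of_nonneg_left (hC _ (node_mem μ)) (norm_nonneg _)

theorem stmt3_general (q b : ℝ) {n : ℕ} (f : (Fin n → ℝ) → ℝ)
    (hf : Summable fun μ : {μ : Fin n → ℕ // Antitone μ} => jacksonTerm q b f μ.1) :
    iterJ q n b f =
      (1 - q) ^ n * ∑' μ : {μ : Fin n → ℕ // Antitone μ}, jacksonTerm q b f μ.1 := by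
  induction n generalizing b with
  | zero =>
    have : Unique {μ : Fin 0 → ℕ // Antitone μ} :=
      uniqueOfSubsingleton ⟨Fin.elim0, Subsingleton.antitone _⟩
    simp only [tsum_fintype, Finset.univ_unique, Finset.sum_singleton, jacksonTerm_fin_zero,
      pow_zero, one_mul]
  | succ n ih =>
    let slice (k : ℕ) (x : Fin n → ℝ) : ℝ := f (Fin.snoc x (b * q ^ k))
    have term_snoc (k : ℕ) (ν : {ν : Fin n → ℕ // Antitone ν}) :
        jacksonTerm q b f (antitoneSnocEquiv n (k, ν)).1 =
          jacksonTerm q (b * q ^ k) (slice k) ν.1 * (b * q ^ k) :=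
      jacksonTerm_snoc q b f ν.1 k
    have summable_pairs := (antitoneSnocEquiv n).summable_iff.mpr hf
    have inner_integral (k : ℕ) : iterJ q n (b * q ^ k) (slice k) * (b * q ^ k) =
        (1 - q) ^ n * ∑' ν, jacksonTerm q b f (antitoneSnocEquiv n (k, ν)).1 := by
      simp only [term_snoc, tsum_mul_right]
      rw [← mul_assoc ((1 - q) ^ n)]
      rcases eq_or_ne (b * q ^ k) 0 with hbk | hbk
      · -- `hf` says nothing about the slice here, but the factor `b * q ^ k` kills it.
        simp only [hbk, mul_zero]
      · congr 1
        refine ih _ _ ((summable_mul_right_iff hbk).mp ?_)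
        exact (summable_pairs.prod_factor k).congr (term_snoc k)
    calc iterJ q (n + 1) b f
        = (1 - q) * ∑' k, iterJ q n (b * q ^ k) (slice k) * (b * q ^ k) := rfl
      _ = (1 - q) ^ (n + 1) *
            ∑' k, ∑' ν, jacksonTerm q b f (antitoneSnocEquiv n (k, ν)).1 := by
          simp only [inner_integral, tsum_mul_left, pow_succ', mul_assoc]
      _ = (1 - q) ^ (n + 1) *
            ∑' μ : {μ : Fin (n + 1) → ℕ // Antitone μ}, jacksonTerm q b f μ.1 := by
          rw [← (antitoneSnocEquiv n).tsum_eq]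
          exact congrArg _ summable_pairs.tsum_prod.symm

theorem stmt3 (q : ℝ) (hq0 : 0 < q) (hq1 : q < 1) (n : ℕ) (hn : 1 ≤ n)
    (f : MvPolynomial (Fin n) ℝ) :
    iterJ q n 1 (fun x => MvPolynomial.eval x f)
      = (1 - q) ^ n *
          ∑' μ : {μ : Fin n → ℕ // Antitone μ},
            q ^ (∑ i, μ.1 i) * MvPolynomial.eval (fun i => q ^ (μ.1 i)) f := by
  have hf : Summable (jacksonTerm q 1 fun x => MvPolynomial.eval x f) :=
    summable_jacksonTerm_of_continuousOn (abs_lt.mpr ⟨by linarith, hq1⟩)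
      (MvPolynomial.continuous_eval f).continuousOn
  simpa [jacksonTerm, Finset.prod_pow_eq_pow_sum] using
    stmt3_general q 1 _ (hf.subtype {μ | Antitone μ})
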